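/- arXiv:2105.00986 — 2 statements merged into one kernel-verified Lean document; each statement's English description precedes it below -/
import Mathlib

section
/- Assume M has the rank-one form, with m₁₂l₁² + m₁₃l₂² ≠ m₁₁ and l₁l₂ = 0. Then there is an isomorphism of k-algebras from k⟨X,Y⟩/(XY + YX) onto the cohomology algebra H(A) sending X to ⌈l₁x₁ − x₂⌉ and Y to ⌈l₂x₁ − x₃⌉. -/
/-!
The change of variables `x = x₁`, `y = l₁x₁ - x₂`, `z = l₂x₁ - x₃` turns `A` into an algebra generated
by `x` together with the cocycles `y` and `z`, which anticommute because `l₁l₂ = 0`. Put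
`f = ∂x = m₁₁x₁² + m₁₂x₂² + m₁₃x₃²`, a central cocycle. In the new variables
`f = (m₁₁ - m₁₂l₁² - m₁₃l₂²)x² + m₁₂y² + m₁₃z²`, and by hypothesis the coefficient of `x²` is nonzero,
so `x²` is a combination of `f`, `y²`, `z²`.

Write `B = k⟨X,Y⟩/(XY + YX)` and let `θ : B[t] → A` send `X, Y, t` to `y, z, f`. Every element of
`A` has the form `θ(p) + xθ(q)` (`exists_polyMap`), and a representation of `A` by `2 × 2` matrices
over `B[t]`, namely left multiplication on `B[t] ⊕ xB[t]`, recovers `p` from `θ(p)`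
(`rep_polyMap`). Since `∂(θ(p) + xθ(q)) = θ(tq)` (`d_two_term`), the cocycles are `θ(B[t])`, the
coboundaries are `θ(tB[t])`, and the cohomology is `B[t]/tB[t] = B`. The inverse of the isomorphism
is induced by `symbol`, which takes `θ(p)` to `p(0)`.
-/

noncomputable section

/-- The skew-commutation relations `xᵢxⱼ + xⱼxᵢ = 0` (`i ≠ j`) among the three generators. -/
inductive SkewRel (k : Type) [Field k] :
    FreeAlgebra k (Fin 3) → FreeAlgebra k (Fin 3) → Prop
  | r01 : SkewRel k
      (FreeAlgebra.ι k 0 * FreeAlgebra.ι k 1 + FreeAlgebra.ι k 1 * FreeAlgebra.ι k 0) 0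
  | r12 : SkewRel k
      (FreeAlgebra.ι k 1 * FreeAlgebra.ι k 2 + FreeAlgebra.ι k 2 * FreeAlgebra.ι k 1) 0
  | r20 : SkewRel k
      (FreeAlgebra.ι k 2 * FreeAlgebra.ι k 0 + FreeAlgebra.ι k 0 * FreeAlgebra.ι k 2) 0

/-- The graded skew polynomial algebra `A = k⟨x₁,x₂,x₃⟩/(x₁x₂+x₂x₁, x₂x₃+x₃x₂, x₃x₁+x₁x₃)`. -/
abbrev SkewAlg (k : Type) [Field k] := RingQuot (SkewRel k)

/-- The generators `x₁, x₂, x₃` of `A` (indexed by `0, 1, 2`). -/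
def X (k : Type) [Field k] (i : Fin 3) : SkewAlg k :=
  RingQuot.mkAlgHom k (SkewRel k) (FreeAlgebra.ι k i)

/-- The degree-`n` homogeneous component `Aⁿ` of `A`: the `n`-th power of the span of the
generators (the algebra `A` is generated in degree `1` by `x₁,x₂,x₃`, and the defining
relations are homogeneous). -/
def deg (k : Type) [Field k] (n : ℕ) : Submodule k (SkewAlg k) :=
  (Submodule.span k {X k 0, X k 1, X k 2}) ^ n

/-- A differential on `A` determined by a matrix `M ∈ M₃(k)`: a `k`-linear map of degree `1`
squaring to zero, satisfying the graded Leibniz rule, with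
`∂(xᵢ) = mᵢ₁x₁² + mᵢ₂x₂² + mᵢ₃x₃²`. -/
structure DGDiff (k : Type) [Field k] (M : Matrix (Fin 3) (Fin 3) k) where
  d : SkewAlg k →ₗ[k] SkewAlg k
  grade : ∀ n : ℕ, ∀ a ∈ deg k n, d a ∈ deg k (n + 1)
  dd : ∀ a : SkewAlg k, d (d a) = 0
  leibniz : ∀ n : ℕ, ∀ a ∈ deg k n, ∀ b : SkewAlg k,
    d (a * b) = d a * b + ((-1 : k) ^ n) • (a * d b)
  dX : ∀ i : Fin 3,
    d (X k i) = M i 0 • (X k 0) ^ 2 + M i 1 • (X k 1) ^ 2 + M i 2 • (X k 2) ^ 2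

/-- `Zⁿ`, the space of cocycles of degree `n`. -/
def cocycle (k : Type) [Field k] {M : Matrix (Fin 3) (Fin 3) k} (D : DGDiff k M) (n : ℕ) :
    Submodule k (SkewAlg k) :=
  LinearMap.ker D.d ⊓ deg k n

/-- `Bⁿ`, the space of coboundaries of degree `n` (`B⁰ = 0`, `Bⁿ⁺¹ = ∂(Aⁿ)`). -/
def cobound (k : Type) [Field k] {M : Matrix (Fin 3) (Fin 3) k} (D : DGDiff k M) :
    ℕ → Submodule k (SkewAlg k)
  | 0 => ⊥
  | n + 1 => (deg k n).map D.d

/-- The identification of two cocycles in `K = ker ∂` when they differ by an element of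
`im ∂` (a two-sided ideal of `K`); quotienting `K` by it yields the cohomology algebra. -/
def cohomRel (k : Type) [Field k] {M : Matrix (Fin 3) (Fin 3) k} (D : DGDiff k M)
    (K : Subalgebra k (SkewAlg k)) : K → K → Prop :=
  fun a b => ((a : SkewAlg k) - (b : SkewAlg k)) ∈ LinearMap.range D.d

/-- The cohomology algebra `H(A) = ker ∂ / im ∂` of `(A, ∂)`, presented as the quotient of
the subalgebra `K` of cocycles by its two-sided ideal `im ∂`. -/
abbrev CohomAlg (k : Type) [Field k] {M : Matrix (Fin 3) (Fin 3) k} (D : DGDiff k M)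
    (K : Subalgebra k (SkewAlg k)) : Type :=
  RingQuot (cohomRel k D K)

/-- The relation `XY + YX` in the free algebra `k⟨X,Y⟩`. -/
inductive HRel17 (k : Type) [Field k] :
    FreeAlgebra k (Fin 2) → FreeAlgebra k (Fin 2) → Prop
  | rel : HRel17 k
      (FreeAlgebra.ι k 0 * FreeAlgebra.ι k 1 + FreeAlgebra.ι k 1 * FreeAlgebra.ι k 0) 0

/-! ### The algebras and their generators -/

section

variable (k : Type) [Field k]

/-- The skew plane `k⟨X,Y⟩/(XY + YX)`, called `B` in the comments below. -/
abbrev SkewPlane : Type := RingQuot (HRel17 k)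

/-- The generators `X`, `Y` of the skew plane, indexed by `0`, `1`. -/
def planeGen (i : Fin 2) : SkewPlane k :=
  RingQuot.mkAlgHom k (HRel17 k) (FreeAlgebra.ι k i)

theorem planeGen_anticomm :
    planeGen k 0 * planeGen k 1 + planeGen k 1 * planeGen k 0 = 0 := by
  have := RingQuot.mkAlgHom_rel k (HRel17.rel (k := k))
  simpa [planeGen] using this

theorem sq_commute_of_anticomm {R : Type} [Ring R] {a b : R} (h : a * b = -(b * a)) :
    Commute (a ^ 2) b := by
  change a ^ 2 * b = b * a ^ 2
  rw [pow_two, mul_assoc, h, mul_neg, ← mul_assoc, h, neg_mul, neg_neg, mul_assoc]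

theorem X_anticomm {i j : Fin 3} (hij : i ≠ j) : X k i * X k j = -(X k j * X k i) := by
  have h01 := RingQuot.mkAlgHom_rel k (SkewRel.r01 (k := k))
  have h12 := RingQuot.mkAlgHom_rel k (SkewRel.r12 (k := k))
  have h20 := RingQuot.mkAlgHom_rel k (SkewRel.r20 (k := k))
  simp only [map_add, map_mul, map_zero] at h01 h12 h20
  rw [eq_neg_iff_add_eq_zero]
  fin_cases i <;> fin_cases j <;> first | exact absurd rfl hij | skip
  · exact h01
  · exact (add_comm _ _).trans h20
  · exact (add_comm _ _).trans h01
  · exact h12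
  · exact h20
  · exact (add_comm _ _).trans h12

theorem skewAlg_induction {P : SkewAlg k → Prop} (hc : ∀ r, P (algebraMap k _ r))
    (hX : ∀ i, P (X k i)) (hmul : ∀ a b, P a → P b → P (a * b))
    (hadd : ∀ a b, P a → P b → P (a + b)) (a : SkewAlg k) : P a := by
  obtain ⟨a, rfl⟩ := RingQuot.mkAlgHom_surjective k (SkewRel k) a
  induction a using FreeAlgebra.induction with
  | grade0 r => rw [AlgHom.commutes]; exact hc r
  | grade1 i => exact hX i
  | mul a b ha hb => rw [map_mul]; exact hmul _ _ ha hb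
  | add a b ha hb => rw [map_add]; exact hadd _ _ ha hb

theorem skewPlane_induction {P : SkewPlane k → Prop} (hc : ∀ r, P (algebraMap k _ r))
    (hX : ∀ i, P (planeGen k i)) (hmul : ∀ a b, P a → P b → P (a * b))
    (hadd : ∀ a b, P a → P b → P (a + b)) (a : SkewPlane k) : P a := by
  obtain ⟨a, rfl⟩ := RingQuot.mkAlgHom_surjective k (HRel17 k) a
  induction a using FreeAlgebra.induction with
  | grade0 r => rw [AlgHom.commutes]; exact hc r
  | grade1 i => exact hX i
  | mul a b ha hb => rw [map_mul]; exact hmul _ _ ha hb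
  | add a b ha hb => rw [map_add]; exact hadd _ _ ha hb

theorem sq_commute_X (i j : Fin 3) : Commute (X k i ^ 2) (X k j) := by
  rcases eq_or_ne i j with rfl | h
  · exact (Commute.refl _).pow_left 2
  · have h1 := X_anticomm k h
    exact sq_commute_of_anticomm h1

theorem sq_central (i : Fin 3) (a : SkewAlg k) : Commute (X k i ^ 2) a := by
  induction a using skewAlg_induction with
  | hc r => exact (Algebra.commutes r _).symm
  | hX j => exact sq_commute_X k i j
  | hmul a b ha hb => exact ha.mul_right hb
  | hadd a b ha hb => exact ha.add_right hb

/-! ### A representation by `2 × 2` matrices -/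

section Matrices

variable {k} {R : Type} [Ring R] [Algebra k R] (l1 l2 : k) (y z g : R)

/-- The images of `x₁, x₂, x₃` under left multiplication on the free right `R`-module with basis
`1, x`, where `x = x₁` acts with `x² = g` and `l₁x₁ - x₂`, `l₂x₁ - x₃` act by sending `1` to
`1 · y`, `1 · z`. The matrices for `x₂`, `x₃` are `l₁x₁ - (l₁x₁ - x₂)` and
`l₂x₁ - (l₂x₁ - x₃)`. -/
def matGen : Fin 3 → Matrix (Fin 2) (Fin 2) R :=
  ![!![0, g; 1, 0], !![-y, -(l1 • g); algebraMap k R l1, y],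
    !![-z, -(l2 • g); algebraMap k R l2, z]]

/-- The representation of `A` on `R ⊕ xR`. The condition `l₁l₂ = 0` is what makes `x₂` and `x₃`
anticommute. -/
def matRep (hyz : y * z + z * y = 0) (hgy : Commute g y) (hgz : Commute g z)
    (h2 : l1 * l2 = 0) : SkewAlg k →ₐ[k] Matrix (Fin 2) (Fin 2) R :=
  RingQuot.liftAlgHom k ⟨FreeAlgebra.lift k (matGen l1 l2 y z g), by
    have h2' : l2 * l1 = 0 := by rw [mul_comm, h2]
    have hyz' : z * y = -(y * z) := (neg_eq_of_add_eq_zero_right hyz).symm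
    rintro _ _ (_ | _ | _) <;>
    · simp only [map_add, map_mul, map_zero, FreeAlgebra.lift_ι_apply, matGen]
      ext i j
      fin_cases i <;> fin_cases j <;>
        simp [Algebra.algebraMap_eq_smul_one, hgy.eq, hgz.eq,
          smul_smul, h2, h2', hyz']⟩

theorem matRep_X (hyz hgy hgz h2) (i : Fin 3) :
    matRep (k := k) l1 l2 y z g hyz hgy hgz h2 (X k i) = matGen l1 l2 y z g i := by
  simp [matRep, X]

/-- The first column of the matrix of `∂x₁`. A suitable choice of `g` gives the corner entry any
prescribed value, provided the coefficient of `g` is nonzero. -/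
theorem matRep_d (hyz hgy hgz h2) (m11 m12 m13 : k) :
    matRep (k := k) l1 l2 y z g hyz hgy hgz h2
        (m11 • X k 0 ^ 2 + m12 • X k 1 ^ 2 + m13 • X k 2 ^ 2) 1 0 = 0 ∧
    matRep (k := k) l1 l2 y z g hyz hgy hgz h2
        (m11 • X k 0 ^ 2 + m12 • X k 1 ^ 2 + m13 • X k 2 ^ 2) 0 0 =
      (m11 - m12 * l1 ^ 2 - m13 * l2 ^ 2) • g + m12 • y ^ 2 + m13 • z ^ 2 := by
  simp only [map_add, map_smul, map_pow, matRep_X, matGen]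
  constructor
  · simp [pow_two, Algebra.algebraMap_eq_smul_one]
  · simp [pow_two, Algebra.algebraMap_eq_smul_one]
    module

end Matrices

/-! ### Splitting off `x₁` on the left -/

section Generic

variable {k} {R : Type} [Ring R] [Algebra k R] (C : Subalgebra k R) (x : R)

/-- The subspace `C + xC`. -/
def twoTerm : Submodule k R :=
  Subalgebra.toSubmodule C ⊔ (Subalgebra.toSubmodule C).map (LinearMap.mulLeft k x)

theorem mem_twoTerm {a : R} : a ∈ twoTerm C x ↔ ∃ p ∈ C, ∃ q ∈ C, a = p + x * q := by
  simp [twoTerm, Submodule.mem_sup, eq_comm]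

variable {C x}

theorem mul_x_mem_twoTerm (hx : x ^ 2 ∈ C) {a : R} (ha : a ∈ twoTerm C x) :
    x * a ∈ twoTerm C x := by
  rw [mem_twoTerm] at ha ⊢
  obtain ⟨p, hp, q, hq, rfl⟩ := ha
  exact ⟨x ^ 2 * q, mul_mem hx hq, p, hp, by noncomm_ring⟩

theorem mul_mem_twoTerm (hx : x ^ 2 ∈ C) {y : R} (hy : y ∈ C) {s : k}
    (hyx : y * x = -(x * y) + s • x ^ 2) {a : R} (ha : a ∈ twoTerm C x) :
    y * a ∈ twoTerm C x := by
  rw [mem_twoTerm] at ha ⊢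
  obtain ⟨p, hp, q, hq, rfl⟩ := ha
  refine ⟨y * p + s • x ^ 2 * q, add_mem (mul_mem hy hp) (mul_mem (C.smul_mem hx s) hq),
    -(y * q), neg_mem (mul_mem hy hq), ?_⟩
  rw [mul_add, ← mul_assoc, hyx]
  noncomm_ring

theorem commute_smul_sub_sub {t u v y : R} (c m n : k) (ht : Commute t y) (hu : Commute u y)
    (hv : Commute v y) : Commute (c • (t - m • u - n • v)) y :=
  ((ht.sub_left (hu.smul_left m)).sub_left (hv.smul_left n)).smul_left c

theorem shear_anticomm {a b c : R} {l1 l2 : k} (h2 : l1 * l2 = 0) (hab : a * b = -(b * a))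
    (hac : a * c = -(c * a)) (hbc : b * c = -(c * b)) :
    (l1 • a - b) * (l2 • a - c) + (l2 • a - c) * (l1 • a - b) = 0 := by
  simp only [sub_mul, mul_sub, smul_mul_assoc, mul_smul_comm, hab, hac, hbc]
  match_scalars <;>
    first | linear_combination (2 : k) * h2 | linear_combination (-2 : k) * h2 | ring

theorem shear_mul {a b : R} {l : k} (hab : a * b = -(b * a)) :
    (l • a - b) * a = -(a * (l • a - b)) + (2 * l) • a ^ 2 := by
  simp only [sub_mul, mul_sub, smul_mul_assoc, mul_smul_comm, hab, pow_two]
  module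

/-- Under the change of variables `y = l₁x₁ - x₂`, `z = l₂x₁ - x₃`, the quadric `∂x₁` becomes
`(m₁₁ - m₁₂l₁² - m₁₃l₂²)x₁² + m₁₂y² + m₁₃z²`, which can be solved for `x₁²`. -/
theorem sq_eq_of_shear {a b c : R} {l1 l2 m11 m12 m13 : k} (hab : a * b = -(b * a))
    (hac : a * c = -(c * a)) (hm : m11 - m12 * l1 ^ 2 - m13 * l2 ^ 2 ≠ 0) :
    a ^ 2 = (m11 - m12 * l1 ^ 2 - m13 * l2 ^ 2)⁻¹ •
      ((m11 • a ^ 2 + m12 • b ^ 2 + m13 • c ^ 2) - m12 • (l1 • a - b) ^ 2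
        - m13 • (l2 • a - c) ^ 2) := by
  rw [eq_inv_smul_iff₀ hm]
  simp only [sub_mul, mul_sub, smul_mul_assoc, mul_smul_comm, hab, hac, pow_two]
  module

end Generic

/-! ### `A` as a free module of rank two over `B[t]` -/

section PlaneMap

variable {k}

/-- The map `B → A` with `X ↦ l₁x₁ - x₂`, `Y ↦ l₂x₁ - x₃`. -/
def planeMap (l1 l2 : k) (h2 : l1 * l2 = 0) : SkewPlane k →ₐ[k] SkewAlg k :=
  RingQuot.liftAlgHom k ⟨FreeAlgebra.lift k ![l1 • X k 0 - X k 1, l2 • X k 0 - X k 2], by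
    rintro _ _ ⟨⟩
    simp only [map_add, map_mul, map_zero, FreeAlgebra.lift_ι_apply]
    exact shear_anticomm h2 (X_anticomm k (by decide)) (X_anticomm k (by decide))
      (X_anticomm k (by decide))⟩

theorem planeMap_zero (l1 l2 : k) (h2) :
    planeMap l1 l2 h2 (planeGen k 0) = l1 • X k 0 - X k 1 := by
  simp [planeMap, planeGen]

theorem planeMap_one (l1 l2 : k) (h2) :
    planeMap l1 l2 h2 (planeGen k 1) = l2 • X k 0 - X k 2 := by
  simp [planeMap, planeGen]

theorem quad_central (m11 m12 m13 : k) (a : SkewAlg k) :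
    Commute (m11 • X k 0 ^ 2 + m12 • X k 1 ^ 2 + m13 • X k 2 ^ 2) a :=
  (((sq_central k 0 a).smul_left m11).add_left ((sq_central k 1 a).smul_left m12)).add_left
    ((sq_central k 2 a).smul_left m13)

/-- The map `B[t] → A` extending `planeMap` by `t ↦ f = m₁₁x₁² + m₁₂x₂² + m₁₃x₃²`; it exists because
`f` is central. -/
def polyMap (l1 l2 : k) (h2 : l1 * l2 = 0) (m11 m12 m13 : k) :
    Polynomial (SkewPlane k) →ₐ[k] SkewAlg k :=
  Polynomial.eval₂AlgHom (planeMap l1 l2 h2)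
    (m11 • X k 0 ^ 2 + m12 • X k 1 ^ 2 + m13 • X k 2 ^ 2)
    fun _ => (quad_central m11 m12 m13 _).symm

variable (l1 l2 : k) (h2 : l1 * l2 = 0) (m11 m12 m13 : k)

theorem polyMap_C (b : SkewPlane k) :
    polyMap l1 l2 h2 m11 m12 m13 (Polynomial.C b) = planeMap l1 l2 h2 b := by
  simp [polyMap]

theorem polyMap_X :
    polyMap l1 l2 h2 m11 m12 m13 Polynomial.X =
      m11 • X k 0 ^ 2 + m12 • X k 1 ^ 2 + m13 • X k 2 ^ 2 := by
  simp [polyMap]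

theorem polyMap_induction {P : SkewAlg k → Prop} (hc : ∀ r, P (algebraMap k _ r))
    (hy : P (l1 • X k 0 - X k 1)) (hz : P (l2 • X k 0 - X k 2))
    (hf : P (m11 • X k 0 ^ 2 + m12 • X k 1 ^ 2 + m13 • X k 2 ^ 2))
    (hmul : ∀ a b, P a → P b → P (a * b)) (hadd : ∀ a b, P a → P b → P (a + b))
    (p : Polynomial (SkewPlane k)) : P (polyMap l1 l2 h2 m11 m12 m13 p) := by
  induction p using Polynomial.induction_on with
  | C b =>
    rw [polyMap_C]
    induction b using skewPlane_induction with
    | hc r => rw [AlgHom.commutes]; exact hc r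
    | hX i =>
      fin_cases i
      · exact (planeMap_zero l1 l2 h2).symm ▸ hy
      · exact (planeMap_one l1 l2 h2).symm ▸ hz
    | hmul a b ha hb => rw [map_mul]; exact hmul _ _ ha hb
    | hadd a b ha hb => rw [map_add]; exact hadd _ _ ha hb
  | add p q hp hq => rw [map_add]; exact hadd _ _ hp hq
  | monomial n b h =>
    rw [pow_succ, ← mul_assoc, map_mul, polyMap_X]
    exact hmul _ _ h hf

/-- `A = θ(B[t]) + x₁θ(B[t])`, where `θ` is `polyMap`. -/
theorem exists_polyMap (h1 : m11 - m12 * l1 ^ 2 - m13 * l2 ^ 2 ≠ 0) (a : SkewAlg k) :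
    ∃ p q, a = polyMap l1 l2 h2 m11 m12 m13 p + X k 0 * polyMap l1 l2 h2 m11 m12 m13 q := by
  set θ := polyMap l1 l2 h2 m11 m12 m13 with hθ
  have hy : l1 • X k 0 - X k 1 ∈ θ.range :=
    ⟨Polynomial.C (planeGen k 0), (polyMap_C ..).trans (planeMap_zero ..)⟩
  have hz : l2 • X k 0 - X k 2 ∈ θ.range :=
    ⟨Polynomial.C (planeGen k 1), (polyMap_C ..).trans (planeMap_one ..)⟩
  have hf : m11 • X k 0 ^ 2 + m12 • X k 1 ^ 2 + m13 • X k 2 ^ 2 ∈ θ.range :=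
    ⟨Polynomial.X, polyMap_X ..⟩
  have h01 : X k 0 * X k 1 = -(X k 1 * X k 0) := X_anticomm k (by decide)
  have h02 : X k 0 * X k 2 = -(X k 2 * X k 0) := X_anticomm k (by decide)
  have hx : X k 0 ^ 2 ∈ θ.range := by
    rw [sq_eq_of_shear h01 h02 h1]
    exact Subalgebra.smul_mem _ (sub_mem (sub_mem hf (Subalgebra.smul_mem _ (pow_mem hy 2) _))
      (Subalgebra.smul_mem _ (pow_mem hz 2) _)) _
  -- `C + x₁C` is stable under left multiplication by the generators, hence by all of `A`.
  have key : ∀ b ∈ twoTerm θ.range (X k 0), a * b ∈ twoTerm θ.range (X k 0) := by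
    induction a using skewAlg_induction with
    | hc r =>
      intro b hb
      rw [← Algebra.smul_def]
      exact Submodule.smul_mem _ _ hb
    | hX i =>
      intro b hb
      have h0 := mul_x_mem_twoTerm hx hb
      have e : ∀ (l : k) (c : SkewAlg k), c * b = l • (X k 0 * b) - (l • X k 0 - c) * b := by
        intro l c
        rw [sub_mul, smul_mul_assoc]; abel
      fin_cases i
      · exact h0
      · refine (e l1 (X k 1)).symm ▸ sub_mem (Submodule.smul_mem _ l1 h0) ?_
        exact mul_mem_twoTerm hx hy (shear_mul h01) hb
      · refine (e l2 (X k 2)).symm ▸ sub_mem (Submodule.smul_mem _ l2 h0) ?_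
        exact mul_mem_twoTerm hx hz (shear_mul h02) hb
    | hmul a b ha hb =>
      intro c hc
      rw [mul_assoc]
      exact ha _ (hb _ hc)
    | hadd a b ha hb =>
      intro c hc
      rw [add_mul]
      exact add_mem (ha _ hc) (hb _ hc)
  have := key 1 ((mem_twoTerm _ _).2 ⟨1, one_mem _, 0, zero_mem _, by simp⟩)
  rw [mul_one, mem_twoTerm] at this
  obtain ⟨_, ⟨p, rfl⟩, _, ⟨q, rfl⟩, h⟩ := this
  exact ⟨p, q, h⟩

/-- The element of `B[t]` that `x₁²` equals once `f` is renamed `t`; see `sq_eq_of_shear`. -/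
def polyRel : Polynomial (SkewPlane k) :=
  (m11 - m12 * l1 ^ 2 - m13 * l2 ^ 2)⁻¹ • (Polynomial.X
    - m12 • Polynomial.C (planeGen k 0) ^ 2 - m13 • Polynomial.C (planeGen k 1) ^ 2)

theorem planeGen_sq_comm (i j : Fin 2) : Commute (planeGen k i ^ 2) (planeGen k j) := by
  have h := planeGen_anticomm k
  fin_cases i <;> fin_cases j
  · exact (Commute.refl _).pow_left 2
  · exact sq_commute_of_anticomm (eq_neg_of_add_eq_zero_left h)
  · exact sq_commute_of_anticomm (eq_neg_of_add_eq_zero_right h)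
  · exact (Commute.refl _).pow_left 2

theorem polyRel_comm (i : Fin 2) :
    Commute (polyRel l1 l2 m11 m12 m13) (Polynomial.C (planeGen k i)) := by
  have h (j : Fin 2) : Commute (Polynomial.C (planeGen k j) ^ 2) (Polynomial.C (planeGen k i)) := by
    rw [← map_pow]
    exact (planeGen_sq_comm j i).map Polynomial.C
  exact commute_smul_sub_sub (R := Polynomial (SkewPlane k)) _ _ _
    (Polynomial.commute_X _) (h 0) (h 1)

/-- The matrix representation of `A` over `B[t]` in which `f` acts with corner entry `t`. -/
def rep : SkewAlg k →ₐ[k] Matrix (Fin 2) (Fin 2) (Polynomial (SkewPlane k)) :=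
  matRep l1 l2 (Polynomial.C (planeGen k 0)) (Polynomial.C (planeGen k 1))
    (polyRel l1 l2 m11 m12 m13)
    (by rw [← map_mul, ← map_mul, ← map_add, planeGen_anticomm, map_zero])
    (polyRel_comm l1 l2 m11 m12 m13 0) (polyRel_comm l1 l2 m11 m12 m13 1) h2

theorem rep_X (i : Fin 3) :
    rep l1 l2 h2 m11 m12 m13 (X k i) = matGen l1 l2 (Polynomial.C (planeGen k 0))
      (Polynomial.C (planeGen k 1)) (polyRel l1 l2 m11 m12 m13) i :=
  matRep_X ..

theorem rep_d (h1 : m11 - m12 * l1 ^ 2 - m13 * l2 ^ 2 ≠ 0) :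
    rep l1 l2 h2 m11 m12 m13 (m11 • X k 0 ^ 2 + m12 • X k 1 ^ 2 + m13 • X k 2 ^ 2) 1 0 = 0 ∧
    rep l1 l2 h2 m11 m12 m13 (m11 • X k 0 ^ 2 + m12 • X k 1 ^ 2 + m13 • X k 2 ^ 2) 0 0 =
      Polynomial.X := by
  refine ⟨(matRep_d ..).1, (matRep_d ..).2.trans ?_⟩
  rw [polyRel, smul_inv_smul₀ h1]
  abel

/-- On `θ(B[t])` the representation is upper triangular with `p` in the corner of `θ(p)`, so that
`θ` is injective. -/
theorem rep_polyMap (h1 : m11 - m12 * l1 ^ 2 - m13 * l2 ^ 2 ≠ 0)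
    (p : Polynomial (SkewPlane k)) :
    rep l1 l2 h2 m11 m12 m13 (polyMap l1 l2 h2 m11 m12 m13 p) 1 0 = 0 ∧
    rep l1 l2 h2 m11 m12 m13 (polyMap l1 l2 h2 m11 m12 m13 p) 0 0 = p := by
  have hmul : ∀ a b, rep l1 l2 h2 m11 m12 m13 b 1 0 = 0 →
      rep l1 l2 h2 m11 m12 m13 (a * b) 1 0 =
        rep l1 l2 h2 m11 m12 m13 a 1 0 * rep l1 l2 h2 m11 m12 m13 b 0 0 ∧
      rep l1 l2 h2 m11 m12 m13 (a * b) 0 0 =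
        rep l1 l2 h2 m11 m12 m13 a 0 0 * rep l1 l2 h2 m11 m12 m13 b 0 0 := by
    intro a b hb
    rw [map_mul]
    simp [Matrix.mul_apply, Fin.sum_univ_two, hb]
  have hX := rep_d l1 l2 h2 m11 m12 m13 h1
  rw [← polyMap_X l1 l2 h2] at hX
  obtain ⟨hX1, hX0⟩ := hX
  induction p using Polynomial.induction_on with
  | C b =>
    rw [polyMap_C]
    induction b using skewPlane_induction with
    | hc r =>
      rw [AlgHom.commutes, AlgHom.commutes]
      simp [Matrix.algebraMap_matrix_apply, Polynomial.algebraMap_apply]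
    | hX i =>
      fin_cases i
      · change rep l1 l2 h2 m11 m12 m13 (planeMap l1 l2 h2 (planeGen k 0)) 1 0 = 0 ∧
          rep l1 l2 h2 m11 m12 m13 (planeMap l1 l2 h2 (planeGen k 0)) 0 0 = _
        rw [planeMap_zero, map_sub, map_smul, rep_X, rep_X]
        simp [matGen, Algebra.algebraMap_eq_smul_one]
      · change rep l1 l2 h2 m11 m12 m13 (planeMap l1 l2 h2 (planeGen k 1)) 1 0 = 0 ∧
          rep l1 l2 h2 m11 m12 m13 (planeMap l1 l2 h2 (planeGen k 1)) 0 0 = _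
        rw [planeMap_one, map_sub, map_smul, rep_X, rep_X]
        simp [matGen, Algebra.algebraMap_eq_smul_one]
    | hmul a b ha hb =>
      rw [map_mul]
      obtain ⟨e1, e2⟩ := hmul (planeMap l1 l2 h2 a) _ hb.1
      exact ⟨e1.trans (by rw [ha.1, zero_mul]), e2.trans (by rw [ha.2, hb.2, ← map_mul])⟩
    | hadd a b ha hb =>
      rw [map_add, map_add]
      simp [ha, hb]
  | add p q hp hq =>
    rw [map_add, map_add]
    simp [hp, hq]
  | monomial n b h =>
    rw [pow_succ, ← mul_assoc, map_mul]
    obtain ⟨e1, e2⟩ := hmul (polyMap l1 l2 h2 m11 m12 m13 _) _ hX1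
    exact ⟨e1.trans (by rw [h.1, zero_mul]), e2.trans (by rw [h.2, hX0])⟩

end PlaneMap

/-! ### Cocycles and coboundaries -/

theorem X_mul_divX_eq_sub {R : Type} [Ring R] (p : Polynomial R) :
    Polynomial.X * p.divX = p - Polynomial.C (p.coeff 0) :=
  eq_sub_of_add_eq p.X_mul_divX_add

section Cohomology

variable {k} {l1 l2 m11 m12 m13 : k} (h2 : l1 * l2 = 0) {M : Matrix (Fin 3) (Fin 3) k}
  (D : DGDiff k M) (K : Subalgebra k (SkewAlg k))

theorem polyMap_mem
    (hd : D.d (X k 0) = m11 • X k 0 ^ 2 + m12 • X k 1 ^ 2 + m13 • X k 2 ^ 2)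
    (hK : ∀ a : SkewAlg k, a ∈ K ↔ D.d a = 0)
    (hz1 : l1 • X k 0 - X k 1 ∈ K) (hz2 : l2 • X k 0 - X k 2 ∈ K) (p) :
    polyMap l1 l2 h2 m11 m12 m13 p ∈ K := by
  refine polyMap_induction l1 l2 h2 m11 m12 m13 K.algebraMap_mem hz1 hz2 ?_
    (fun _ _ => K.mul_mem) (fun _ _ => K.add_mem) p
  rw [← hd, hK]
  exact D.dd _

/-- In the decomposition `A = θ(B[t]) + x₁θ(B[t])` the differential is `∂(θ(p) + x₁θ(q)) = θ(tq)`. -/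
theorem d_two_term
    (hd : D.d (X k 0) = m11 • X k 0 ^ 2 + m12 • X k 1 ^ 2 + m13 • X k 2 ^ 2)
    (hK : ∀ a : SkewAlg k, a ∈ K ↔ D.d a = 0)
    (hmem : ∀ p, polyMap l1 l2 h2 m11 m12 m13 p ∈ K) (p q) :
    D.d (polyMap l1 l2 h2 m11 m12 m13 p + X k 0 * polyMap l1 l2 h2 m11 m12 m13 q) =
      polyMap l1 l2 h2 m11 m12 m13 (Polynomial.X * q) := by
  have hp := (hK _).1 (hmem p)
  have hq := (hK _).1 (hmem q)
  have hX : X k 0 ∈ deg k 1 := by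
    rw [deg, pow_one]
    exact Submodule.subset_span (by simp)
  rw [map_add, hp, D.leibniz 1 _ hX, hq, hd, map_mul, polyMap_X, mul_zero, smul_zero, add_zero,
    zero_add]

/-- Every cocycle lies in `θ(B[t])`: if `∂(θ(p) + x₁θ(q)) = θ(tq) = 0`, then `tq = 0`, so `q = 0`. -/
theorem exists_eq_polyMap (h1 : m11 - m12 * l1 ^ 2 - m13 * l2 ^ 2 ≠ 0)
    (hd : D.d (X k 0) = m11 • X k 0 ^ 2 + m12 • X k 1 ^ 2 + m13 • X k 2 ^ 2)
    (hK : ∀ a : SkewAlg k, a ∈ K ↔ D.d a = 0)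
    (hmem : ∀ p, polyMap l1 l2 h2 m11 m12 m13 p ∈ K) {a : SkewAlg k} (ha : a ∈ K) :
    ∃ p, a = polyMap l1 l2 h2 m11 m12 m13 p := by
  obtain ⟨p, q, rfl⟩ := exists_polyMap l1 l2 h2 m11 m12 m13 h1 a
  have e := (hK _).1 ha
  rw [d_two_term h2 D K hd hK hmem] at e
  have hq := (rep_polyMap l1 l2 h2 m11 m12 m13 h1 (Polynomial.X * q)).2
  rw [e, map_zero] at hq
  -- Comparing coefficients avoids any domain hypothesis on `B`: `t` is regular in `B[t]`.
  have hq0 : q = 0 := by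
    ext n
    have := congrArg (fun r => Polynomial.coeff r (n + 1)) hq
    simpa using this.symm
  refine ⟨p, ?_⟩
  rw [hq0, map_zero, mul_zero, add_zero]

/-- The ring homomorphism `ker ∂ → B`, `θ(p) ↦ p(0)`, read off from the corner entry of the matrix
representation; that entry is multiplicative on `ker ∂` because cocycles act by upper triangular
matrices. -/
def symbol (h1 : m11 - m12 * l1 ^ 2 - m13 * l2 ^ 2 ≠ 0)
    (hK : ∀ a ∈ K, ∃ p, a = polyMap l1 l2 h2 m11 m12 m13 p) : K →+* SkewPlane k where
  toFun a := Polynomial.constantCoeff (rep l1 l2 h2 m11 m12 m13 a 0 0)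
  map_one' := by simp
  map_zero' := by simp
  map_add' a b := by simp
  map_mul' a b := by
    obtain ⟨p, hp⟩ := hK a a.2
    obtain ⟨q, hq⟩ := hK b b.2
    change Polynomial.constantCoeff (rep l1 l2 h2 m11 m12 m13 ((a : SkewAlg k) * b) 0 0) =
      Polynomial.constantCoeff (rep l1 l2 h2 m11 m12 m13 a 0 0) *
        Polynomial.constantCoeff (rep l1 l2 h2 m11 m12 m13 b 0 0)
    rw [hp, hq, ← map_mul, (rep_polyMap l1 l2 h2 m11 m12 m13 h1 (p * q)).2,
      (rep_polyMap l1 l2 h2 m11 m12 m13 h1 p).2, (rep_polyMap l1 l2 h2 m11 m12 m13 h1 q).2,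
      map_mul]

end Cohomology
end

/-! ### The isomorphism -/

/-- Assume `M` has the rank-one form, with `m₁₂l₁² + m₁₃l₂² ≠ m₁₁` and
`l₁l₂ = 0`.  Then there is a `k`-algebra isomorphism from `k⟨X,Y⟩/(XY + YX)` onto the
cohomology algebra `H(A)` sending `X` to `⌈l₁x₁ − x₂⌉` and `Y` to `⌈l₂x₁ − x₃⌉`. -/
theorem stmt17 (k : Type) [Field k] [IsAlgClosed k] [CharZero k]
    (m11 m12 m13 l1 l2 : k) (hm : ¬(m11 = 0 ∧ m12 = 0 ∧ m13 = 0))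
    (M : Matrix (Fin 3) (Fin 3) k)
    (hM : M = !![m11, m12, m13; l1 * m11, l1 * m12, l1 * m13; l2 * m11, l2 * m12, l2 * m13])
    (D : DGDiff k M)
    (h1 : m12 * l1 ^ 2 + m13 * l2 ^ 2 ≠ m11) (h2 : l1 * l2 = 0)
    (K : Subalgebra k (SkewAlg k)) (hK : ∀ a : SkewAlg k, a ∈ K ↔ D.d a = 0)
    (hz1 : l1 • X k 0 - X k 1 ∈ K) (hz2 : l2 • X k 0 - X k 2 ∈ K) :
    ∃ φ : RingQuot (HRel17 k) ≃ₐ[k] CohomAlg k D K,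
      φ (RingQuot.mkAlgHom k (HRel17 k) (FreeAlgebra.ι k 0)) =
        RingQuot.mkAlgHom k (cohomRel k D K) ⟨l1 • X k 0 - X k 1, hz1⟩ ∧
      φ (RingQuot.mkAlgHom k (HRel17 k) (FreeAlgebra.ι k 1)) =
        RingQuot.mkAlgHom k (cohomRel k D K) ⟨l2 • X k 0 - X k 2, hz2⟩ := by
  have hlead : m11 - m12 * l1 ^ 2 - m13 * l2 ^ 2 ≠ 0 := fun h => h1 (by linear_combination -h)
  have hd : D.d (X k 0) = m11 • X k 0 ^ 2 + m12 • X k 1 ^ 2 + m13 • X k 2 ^ 2 := by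
    rw [D.dX, hM]
    simp
  have hmem := polyMap_mem h2 D K hd hK hz1 hz2
  have hform : ∀ a ∈ K, ∃ p, a = polyMap l1 l2 h2 m11 m12 m13 p :=
    fun a ha => exists_eq_polyMap h2 D K hlead hd hK hmem ha
  have hdX := fun q => d_two_term h2 D K hd hK hmem 0 q
  let ψ : SkewPlane k →ₐ[k] K := (planeMap l1 l2 h2).codRestrict K fun b => by
    rw [← polyMap_C l1 l2 h2 m11 m12 m13]
    exact hmem _
  let φ : SkewPlane k →ₐ[k] CohomAlg k D K := (RingQuot.mkAlgHom k (cohomRel k D K)).comp ψ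
  let σ := symbol h2 K hlead hform
  -- A coboundary is some `θ(tq)`, and `tq` has no constant term.
  have hσ : ∀ ⦃a b : K⦄, cohomRel k D K a b → σ a = σ b := by
    rintro a b ⟨c, hc⟩
    obtain ⟨p, q, rfl⟩ := exists_polyMap l1 l2 h2 m11 m12 m13 hlead c
    rw [d_two_term h2 D K hd hK hmem] at hc
    rw [← sub_eq_zero, ← map_sub]
    change Polynomial.constantCoeff (rep l1 l2 h2 m11 m12 m13 ((a : SkewAlg k) - b) 0 0) = 0
    rw [← hc, (rep_polyMap l1 l2 h2 m11 m12 m13 hlead _).2]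
    simp
  let L : CohomAlg k D K →+* SkewPlane k := RingQuot.lift ⟨σ, hσ⟩
  have hL : ∀ b, L (φ b) = b := by
    intro b
    have e : L (φ b) = σ (ψ b) := by
      change RingQuot.lift ⟨σ, hσ⟩ (RingQuot.mkAlgHom k (cohomRel k D K) (ψ b)) = _
      rw [← AlgHom.coe_toRingHom, RingQuot.mkAlgHom_coe, RingQuot.lift_mkRingHom_apply]
    rw [e]
    change Polynomial.constantCoeff (rep l1 l2 h2 m11 m12 m13 (planeMap l1 l2 h2 b) 0 0) = b
    rw [← polyMap_C l1 l2 h2 m11 m12 m13, (rep_polyMap l1 l2 h2 m11 m12 m13 hlead _).2]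
    simp
  have hsurj : Function.Surjective φ := by
    intro h
    obtain ⟨a, rfl⟩ := RingQuot.mkAlgHom_surjective k (cohomRel k D K) h
    obtain ⟨p, hp⟩ := hform a a.2
    -- The cocycle `θ(p)` differs from `θ(p(0))` by `θ(tp') = ∂(x₁θ(p'))`.
    refine ⟨p.coeff 0, (RingQuot.mkAlgHom_rel k (s := cohomRel k D K) ?_).symm⟩
    refine ⟨_, (hdX p.divX).trans ?_⟩
    change _ = (a : SkewAlg k) - planeMap l1 l2 h2 (p.coeff 0)
    rw [hp, ← polyMap_C l1 l2 h2 m11 m12 m13, ← map_sub,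
      ← X_mul_divX_eq_sub]
  refine ⟨AlgEquiv.ofBijective φ ⟨Function.LeftInverse.injective hL, hsurj⟩, ?_, ?_⟩
  · exact congrArg (RingQuot.mkAlgHom k (cohomRel k D K)) (Subtype.ext (planeMap_zero l1 l2 h2))
  · exact congrArg (RingQuot.mkAlgHom k (cohomRel k D K)) (Subtype.ext (planeMap_one l1 l2 h2))
end
end

section
/- Assume M has the rank-one form, with m₁₂l₁² + m₁₃l₂² = m₁₁, l₁ ≠ 0 and l₂ = 0 (so m₁₁ = m₁₂l₁²). Then there is an isomorphism of k-algebras from k⟨X,Y,Z⟩/(m₁₂X² + m₁₃Y², ZX − XZ, ZY − YZ, XY + YX) onto the cohomology algebra H(A) sending X to ⌈l₁x₁ − x₂⌉, Y to ⌈x₃⌉ and Z to ⌈x₁²⌉. -/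
/-!
Put `u = l₁x₁ − x₂`, `y = x₃`, `z = x₁²` and let `S ⊆ A` be the subalgebra they generate. All three
are cocycles, so `∂` vanishes on `S`. Three facts give the result.

* `A = S + x₁S` (`exists_decomp`), since `S + x₁S` contains `1` and is stable under left
  multiplication by the generators; here `u x₁ = 2l₁z − x₁u`, `y x₁ = −x₁y`.
* `S` is isomorphic to `B = k⟨X,Y,Z⟩/(ZX − XZ, ZY − YZ, XY + YX)` (`bToSub_injective`). Left
  multiplication on the free right `B`-module `B ⊕ x₁B` can be written down as a representation
  `A → M₂(B)` (`aRep`), and the composite `B → A → M₂(B)` recovers `b` as an entry of its matrix.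
* `W = m₁₂X² + m₁₃Y²` is a non-zero-divisor in `B` (`bW_mul_eq_zero`). A representation
  `B → M₂(k[a,b,c])` shows that the monomials `XⁱYʲZˡ` form a basis (`bCoord_injective`), and it
  sends `W` to the nonzero scalar `m₁₂a² + m₁₃b²`.

The hypothesis `m₁₁ = m₁₂l₁²` makes `w = ∂x₁ = m₁₂u² + m₁₃y²` the image of `W` in `S`. The Leibniz
rule gives `∂(p + x₁q) = w q` for `p, q ∈ S`. Hence `ker ∂ = S ≅ B`, `im ∂ = wS`, and
`H(A) ≅ B/(W)`, which is the required presentation.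
-/


noncomputable section

/-- The relations `m₁₂X² + m₁₃Y²`, `ZX − XZ`, `ZY − YZ`, `XY + YX` in the free algebra
`k⟨X,Y,Z⟩` (with `X, Y, Z` indexed by `0, 1, 2`). -/
inductive HRel19 (k : Type) [Field k] (m12 m13 : k) :
    FreeAlgebra k (Fin 3) → FreeAlgebra k (Fin 3) → Prop
  | rel1 : HRel19 k m12 m13
      (m12 • (FreeAlgebra.ι k 0 * FreeAlgebra.ι k 0) +
        m13 • (FreeAlgebra.ι k 1 * FreeAlgebra.ι k 1)) 0
  | rel2 : HRel19 k m12 m13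
      (FreeAlgebra.ι k 2 * FreeAlgebra.ι k 0 - FreeAlgebra.ι k 0 * FreeAlgebra.ι k 2) 0
  | rel3 : HRel19 k m12 m13
      (FreeAlgebra.ι k 2 * FreeAlgebra.ι k 1 - FreeAlgebra.ι k 1 * FreeAlgebra.ι k 2) 0
  | rel4 : HRel19 k m12 m13
      (FreeAlgebra.ι k 0 * FreeAlgebra.ι k 1 + FreeAlgebra.ι k 1 * FreeAlgebra.ι k 0) 0

/-! ### The algebra of cocycles by generators and relations -/

/-- Relations of the algebra `B = k⟨X,Y,Z⟩/(ZX − XZ, ZY − YZ, XY + YX)`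
(with `X, Y, Z` indexed by `0, 1, 2`). -/
inductive CocycleRel (k : Type) [Field k] :
    FreeAlgebra k (Fin 3) → FreeAlgebra k (Fin 3) → Prop
  | zx : CocycleRel k (FreeAlgebra.ι k 2 * FreeAlgebra.ι k 0)
      (FreeAlgebra.ι k 0 * FreeAlgebra.ι k 2)
  | zy : CocycleRel k (FreeAlgebra.ι k 2 * FreeAlgebra.ι k 1)
      (FreeAlgebra.ι k 1 * FreeAlgebra.ι k 2)
  | yx : CocycleRel k (FreeAlgebra.ι k 1 * FreeAlgebra.ι k 0)
      (-(FreeAlgebra.ι k 0 * FreeAlgebra.ι k 1))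

/-- The algebra `B = k⟨X,Y,Z⟩/(ZX − XZ, ZY − YZ, XY + YX)`, which turns out to be the algebra
of cocycles of `A`. -/
abbrev CocycleAlg (k : Type) [Field k] := RingQuot (CocycleRel k)

/-- The generators `X, Y, Z` of `B` (indexed by `0, 1, 2`). -/
def bGen (k : Type) [Field k] (i : Fin 3) : CocycleAlg k :=
  RingQuot.mkAlgHom k (CocycleRel k) (FreeAlgebra.ι k i)

/-- A subspace of a finitely presented algebra that contains `1` and is stable under left
multiplication by the generators is everything. -/
theorem submodule_eq_top_of_gen {k : Type} [Field k]
    {r : FreeAlgebra k (Fin 3) → FreeAlgebra k (Fin 3) → Prop}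
    (N : Submodule k (RingQuot r)) (h1 : (1 : RingQuot r) ∈ N)
    (h : ∀ i, ∀ b ∈ N, RingQuot.mkAlgHom k r (FreeAlgebra.ι k i) * b ∈ N)
    (b : RingQuot r) : b ∈ N := by
  obtain ⟨f, rfl⟩ := RingQuot.mkAlgHom_surjective k r b
  have key : ∀ f : FreeAlgebra k (Fin 3), ∀ b ∈ N, RingQuot.mkAlgHom k r f * b ∈ N := by
    intro f
    induction f using FreeAlgebra.induction with
    | grade0 c =>
      intro b hb
      rw [AlgHom.commutes, ← Algebra.smul_def]
      exact N.smul_mem c hb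
    | grade1 i => exact h i
    | mul f g hf hg =>
      intro b hb
      rw [map_mul, mul_assoc]
      exact hf _ (hg _ hb)
    | add f g hf hg =>
      intro b hb
      rw [map_add, add_mul]
      exact N.add_mem (hf _ hb) (hg _ hb)
  simpa using key f 1 h1

/-! ### Identities for anticommuting elements of a ring -/

section Ring

variable {k R : Type} [Field k] [Ring R] [Algebra k R]

theorem anticomm_pow {a b : R} (h : b * a = -(a * b)) (n : ℕ) :
    b * a ^ n = (-1 : k) ^ n • (a ^ n * b) := by
  induction n with
  | zero => simp
  | succ n ih =>
    rw [pow_succ, ← mul_assoc, ih, smul_mul_assoc, mul_assoc, h]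
    simp [pow_succ, mul_assoc]

theorem anticomm_sq {a b : R} (h : b * a = -(a * b)) : a ^ 2 * b = b * a ^ 2 := by
  rw [pow_two, ← mul_assoc, h, neg_mul, mul_assoc a b, h, mul_neg, neg_neg, mul_assoc]

/-- For `a = x₁`, `b = x₂` this computes `u² = l²x₁² + x₂²` with `u = l x₁ − x₂`. -/
theorem anticomm_u_sq {a b : R} (h : b * a = -(a * b)) (l : k) :
    (l • a - b) * (l • a - b) = (l ^ 2) • a ^ 2 + b ^ 2 := by
  simp only [mul_sub, sub_mul, mul_smul_comm, smul_mul_assoc, h, smul_sub, smul_smul, pow_two, smul_neg]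
  abel

theorem anticomm_u_mul {a b : R} (h : b * a = -(a * b)) (l : k) :
    (l • a - b) * a = (2 * l) • a ^ 2 - a * (l • a - b) := by
  simp only [mul_sub, sub_mul, mul_smul_comm, smul_mul_assoc, h, two_mul, add_smul, pow_two]
  abel

/-- Left multiplication by `x₃` preserves `S + x₁S`. -/
theorem anticomm_decomp_y {a y : R} (h : y * a = -(a * y)) (p q : R) :
    y * (p + a * q) = y * p + a * -(y * q) := by
  rw [mul_add, ← mul_assoc, h, neg_mul, mul_neg, mul_assoc]

/-- Left multiplication by `u = l x₁ − x₂` preserves `S + x₁S`. -/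
theorem anticomm_decomp_u {a b : R} (h : b * a = -(a * b)) (l : k) (p q : R) :
    (l • a - b) * (p + a * q) =
      ((l • a - b) * p + (2 * l) • (a ^ 2 * q)) + a * -((l • a - b) * q) := by
  have hu := anticomm_u_mul h l
  generalize l • a - b = u at hu ⊢
  rw [mul_add, ← mul_assoc, hu, sub_mul, smul_mul_assoc, mul_assoc a, mul_neg]
  abel

/-- The matrices giving the left multiplication by `x₁, x₂, x₃` on `S ⊕ x₁S` anticommute. -/
theorem rep_relations {x y z : R} (hzx : z * x = x * z) (hzy : z * y = y * z)
    (hyx : y * x = -(x * y)) (l : k) :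
    let m₁ : Matrix (Fin 2) (Fin 2) R := !![0, z; 1, 0]
    let m₂ : Matrix (Fin 2) (Fin 2) R := !![-x, -(l • z); algebraMap k R l, x]
    let m₃ : Matrix (Fin 2) (Fin 2) R := !![y, 0; 0, -y]
    m₁ * m₂ + m₂ * m₁ = 0 ∧ m₂ * m₃ + m₃ * m₂ = 0 ∧ m₃ * m₁ + m₁ * m₃ = 0 := by
  intro m₁ m₂ m₃
  refine ⟨?_, ?_, ?_⟩ <;> ext i j : 1 <;> fin_cases i <;> fin_cases j <;>
    simp [m₁, m₂, m₃, hzx, hzy, hyx, Algebra.algebraMap_eq_smul_one]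

end Ring

/-! ### Monomial basis of `B` and regularity of `W` -/

section CocycleAlg

variable (k : Type) [Field k]

theorem bGen_zx : bGen k 2 * bGen k 0 = bGen k 0 * bGen k 2 := by
  simpa [bGen] using RingQuot.mkAlgHom_rel k (CocycleRel.zx (k := k))

theorem bGen_zy : bGen k 2 * bGen k 1 = bGen k 1 * bGen k 2 := by
  simpa [bGen] using RingQuot.mkAlgHom_rel k (CocycleRel.zy (k := k))

theorem bGen_yx : bGen k 1 * bGen k 0 = -(bGen k 0 * bGen k 1) := by
  simpa [bGen] using RingQuot.mkAlgHom_rel k (CocycleRel.yx (k := k))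

/-- The representation of `B` by `2 × 2` matrices over `k[a,b,c]`: `X` and `Y` act by `a` and `b`
times two anticommuting involutions, and `Z` acts by the scalar `c`. -/
def bRep : CocycleAlg k →ₐ[k] Matrix (Fin 2) (Fin 2) (MvPolynomial (Fin 3) k) :=
  RingQuot.liftAlgHom k ⟨FreeAlgebra.lift k
    ![!![0, MvPolynomial.X 0; MvPolynomial.X 0, 0],
      !![MvPolynomial.X 1, 0; 0, -MvPolynomial.X 1],
      !![MvPolynomial.X 2, 0; 0, MvPolynomial.X 2]], by
    intro f g h
    cases h <;> ext i j : 1 <;> fin_cases i <;> fin_cases j <;>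
      simp [Matrix.mul_apply, Fin.sum_univ_two, mul_comm]⟩

theorem bRep_zero : bRep k (bGen k 0) = !![0, MvPolynomial.X 0; MvPolynomial.X 0, 0] := by
  simp [bRep, bGen]

theorem bRep_one : bRep k (bGen k 1) = !![MvPolynomial.X 1, 0; 0, -MvPolynomial.X 1] := by
  simp [bRep, bGen]

theorem bRep_two : bRep k (bGen k 2) = !![MvPolynomial.X 2, 0; 0, MvPolynomial.X 2] := by
  simp [bRep, bGen]

/-- The linear map `B → k[a,b,c]` summing the first column of the matrix representation.
It sends `XⁱYʲZˡ` to `aⁱbʲcˡ`. -/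
def bCoord : CocycleAlg k →ₗ[k] MvPolynomial (Fin 3) k where
  toFun b := bRep k b 0 0 + bRep k b 1 0
  map_add' b c := by simp only [map_add, Matrix.add_apply]; ring
  map_smul' t b := by simp [smul_add]

/-- The linear map `k[a,b,c] → B` with `aⁱbʲcˡ ↦ XⁱYʲZˡ`. -/
def bMonomials : MvPolynomial (Fin 3) k →ₗ[k] CocycleAlg k :=
  (MvPolynomial.basisMonomials (Fin 3) k).constr k
    fun s => bGen k 0 ^ s 0 * bGen k 1 ^ s 1 * bGen k 2 ^ s 2

theorem bMonomials_monomial (s : Fin 3 →₀ ℕ) :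
    bMonomials k (MvPolynomial.monomial s 1) =
      bGen k 0 ^ s 0 * bGen k 1 ^ s 1 * bGen k 2 ^ s 2 := by
  have := (MvPolynomial.basisMonomials (Fin 3) k).constr_basis k
    (fun s => bGen k 0 ^ s 0 * bGen k 1 ^ s 1 * bGen k 2 ^ s 2) s
  simpa [bMonomials] using this

theorem bCoord_zero_mul (b : CocycleAlg k) :
    bCoord k (bGen k 0 * b) = MvPolynomial.X 0 * bCoord k b := by
  simp [bCoord, bRep_zero, Matrix.mul_apply, Fin.sum_univ_two]
  ring

theorem bCoord_zero_pow_mul (n : ℕ) (b : CocycleAlg k) :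
    bCoord k (bGen k 0 ^ n * b) = MvPolynomial.X 0 ^ n * bCoord k b := by
  induction n with
  | zero => simp
  | succ n ih => rw [pow_succ', mul_assoc, bCoord_zero_mul, ih, pow_succ', mul_assoc]

theorem bCoord_monomial (i j l : ℕ) :
    bCoord k (bGen k 0 ^ i * bGen k 1 ^ j * bGen k 2 ^ l) =
      MvPolynomial.X 0 ^ i * MvPolynomial.X 1 ^ j * MvPolynomial.X 2 ^ l := by
  have h1 : (!![MvPolynomial.X 1, 0; 0, -MvPolynomial.X 1] :
      Matrix (Fin 2) (Fin 2) (MvPolynomial (Fin 3) k)) =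
      Matrix.diagonal ![MvPolynomial.X 1, -MvPolynomial.X 1] := by
    ext i j : 1; fin_cases i <;> fin_cases j <;> simp
  have h2 : (!![MvPolynomial.X 2, 0; 0, MvPolynomial.X 2] :
      Matrix (Fin 2) (Fin 2) (MvPolynomial (Fin 3) k)) =
      Matrix.diagonal ![MvPolynomial.X 2, MvPolynomial.X 2] := by
    ext i j : 1; fin_cases i <;> fin_cases j <;> simp
  rw [mul_assoc, bCoord_zero_pow_mul, mul_assoc]
  congr 1
  simp [bCoord, bRep_one, bRep_two, h1, h2, Matrix.diagonal_pow]

theorem bCoord_bMonomials (f : MvPolynomial (Fin 3) k) : bCoord k (bMonomials k f) = f := by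
  have : bCoord k ∘ₗ bMonomials k = LinearMap.id := by
    refine (MvPolynomial.basisMonomials (Fin 3) k).ext fun s => ?_
    simp only [MvPolynomial.coe_basisMonomials, LinearMap.comp_apply, bMonomials_monomial,
      bCoord_monomial, LinearMap.id_apply]
    rw [MvPolynomial.monomial_eq, Finsupp.prod_fintype _ _ (by simp), Fin.prod_univ_three]
    simp
  exact LinearMap.congr_fun this f

theorem bGen_one_mul_zero_pow (n : ℕ) :
    bGen k 1 * bGen k 0 ^ n = (-1 : k) ^ n • (bGen k 0 ^ n * bGen k 1) :=
  anticomm_pow (bGen_yx k) n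

/-- The monomials `XⁱYʲZˡ` span `B`. -/
theorem bMonomials_surjective : Function.Surjective (bMonomials k) := by
  intro b
  have hc1 (n : ℕ) : bGen k 2 * bGen k 0 ^ n = bGen k 0 ^ n * bGen k 2 :=
    (Commute.pow_right (bGen_zx k) n)
  have hc2 (n : ℕ) : bGen k 2 * bGen k 1 ^ n = bGen k 1 ^ n * bGen k 2 :=
    (Commute.pow_right (bGen_zy k) n)
  have gen : ∀ i : Fin 3, ∀ s : Fin 3 →₀ ℕ, ∃ c : k,
      bGen k i * bMonomials k (MvPolynomial.monomial s 1) =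
        c • bMonomials k (MvPolynomial.monomial (s + Finsupp.single i 1) 1) := by
    intro i s
    simp only [bMonomials_monomial]
    fin_cases i
    · exact ⟨1, by simp [pow_succ', mul_assoc]⟩
    · refine ⟨(-1) ^ s 0, ?_⟩
      simp only [Fin.mk_one, ← mul_assoc, bGen_one_mul_zero_pow]
      simp [pow_succ', mul_assoc]
    · refine ⟨1, ?_⟩
      simp only [Fin.reduceFinMk, ← mul_assoc, hc1]
      simp only [mul_assoc]
      rw [← mul_assoc (bGen k 2), hc2]
      simp [pow_succ', mul_assoc]
  refine submodule_eq_top_of_gen (LinearMap.range (bMonomials k))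
    ⟨1, by simpa using bMonomials_monomial k 0⟩ ?_ b
  rintro i _ ⟨f, rfl⟩
  change bGen k i * _ ∈ _
  induction f using MvPolynomial.induction_on' with
  | monomial s a =>
    obtain ⟨c, hc⟩ := gen i s
    have ha : MvPolynomial.monomial s a = a • MvPolynomial.monomial s (1 : k) := by
      simp [MvPolynomial.smul_monomial]
    rw [ha, map_smul, mul_smul_comm, hc]
    exact Submodule.smul_mem _ _ (Submodule.smul_mem _ _ ⟨_, rfl⟩)
  | add p q hp hq =>
    rw [map_add, mul_add]
    exact Submodule.add_mem _ hp hq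

/-- `XⁱYʲZˡ` is a basis of `B`, so the coordinate map is injective. -/
theorem bCoord_injective : Function.Injective (bCoord k) := by
  intro a b h
  obtain ⟨f, rfl⟩ := bMonomials_surjective k a
  obtain ⟨g, rfl⟩ := bMonomials_surjective k b
  rw [bCoord_bMonomials, bCoord_bMonomials] at h
  rw [h]

/-- The element `W = m₁₂X² + m₁₃Y²` of `B`. -/
def bW (m12 m13 : k) : CocycleAlg k :=
  m12 • (bGen k 0 * bGen k 0) + m13 • (bGen k 1 * bGen k 1)

/-- `W` is a non-zero-divisor: in the matrix representation it is the nonzero scalar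
`m₁₂a² + m₁₃b²`. -/
theorem bW_mul_eq_zero {m12 m13 : k} (hm : ¬(m12 = 0 ∧ m13 = 0)) {b : CocycleAlg k}
    (h : bW k m12 m13 * b = 0) : b = 0 := by
  set p : MvPolynomial (Fin 3) k := m12 • MvPolynomial.X 0 ^ 2 + m13 • MvPolynomial.X 1 ^ 2
    with hp
  have hW : bCoord k (bW k m12 m13 * b) = p * bCoord k b := by
    simp [bCoord, bW, bRep_zero, bRep_one, Matrix.mul_apply, Fin.sum_univ_two, hp,
      MvPolynomial.smul_eq_C_mul]
    ring
  have hp0 : p ≠ 0 := by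
    intro h0
    apply hm
    have e1 := congrArg (MvPolynomial.eval ![1, 0, 0]) h0
    have e2 := congrArg (MvPolynomial.eval ![0, 1, 0]) h0
    simp [hp, MvPolynomial.smul_eval] at e1 e2
    exact ⟨e1, e2⟩
  rw [h, map_zero] at hW
  apply bCoord_injective k
  rw [map_zero]
  exact (mul_eq_zero.mp hW.symm).resolve_left hp0

end CocycleAlg

/-! ### The decomposition `A = S ⊕ x₁S` -/

section SkewAlg

variable (k : Type) [Field k]

theorem X_one_zero : X k 1 * X k 0 = -(X k 0 * X k 1) := by
  have := RingQuot.mkAlgHom_rel k (SkewRel.r01 (k := k))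
  simp only [map_add, map_mul, map_zero] at this
  exact eq_neg_of_add_eq_zero_right this

theorem X_two_one : X k 2 * X k 1 = -(X k 1 * X k 2) := by
  have := RingQuot.mkAlgHom_rel k (SkewRel.r12 (k := k))
  simp only [map_add, map_mul, map_zero] at this
  exact eq_neg_of_add_eq_zero_right this

theorem X_two_zero : X k 2 * X k 0 = -(X k 0 * X k 2) := by
  have := RingQuot.mkAlgHom_rel k (SkewRel.r20 (k := k))
  simp only [map_add, map_mul, map_zero] at this
  exact eq_neg_of_add_eq_zero_left this

/-- The left regular representation of `A = S ⊕ x₁S`, a free right module over the subalgebra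
`S ≅ B` generated by `u = l x₁ − x₂`, `x₃` and `x₁²`, as `2 × 2` matrices over `B`. It is defined
by its values on `x₁, x₂, x₃`, so it does not presuppose the decomposition. -/
def aRep (l : k) : SkewAlg k →ₐ[k] Matrix (Fin 2) (Fin 2) (CocycleAlg k) :=
  RingQuot.liftAlgHom k ⟨FreeAlgebra.lift k
    ![!![0, bGen k 2; 1, 0],
      !![-bGen k 0, -(l • bGen k 2); algebraMap k _ l, bGen k 0],
      !![bGen k 1, 0; 0, -bGen k 1]], by
    intro f g h
    obtain ⟨h1, h2, h3⟩ := rep_relations (bGen_zx k) (bGen_zy k) (bGen_yx k) l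
    cases h
    · simp only [map_add, map_mul, map_zero, FreeAlgebra.lift_ι_apply]
      exact h1
    · simp only [map_add, map_mul, map_zero, FreeAlgebra.lift_ι_apply]
      exact h2
    · simp only [map_add, map_mul, map_zero, FreeAlgebra.lift_ι_apply]
      exact h3⟩

theorem aRep_zero (l : k) : aRep k l (X k 0) = !![0, bGen k 2; 1, 0] := by
  simp [aRep, X]

theorem aRep_one (l : k) : aRep k l (X k 1) =
    !![-bGen k 0, -(l • bGen k 2); algebraMap k _ l, bGen k 0] := by
  simp [aRep, X]

theorem aRep_two (l : k) : aRep k l (X k 2) = !![bGen k 1, 0; 0, -bGen k 1] := by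
  simp [aRep, X]

theorem X_two_u (l : k) :
    X k 2 * (l • X k 0 - X k 1) = -((l • X k 0 - X k 1) * X k 2) := by
  simp only [mul_sub, sub_mul, mul_smul_comm, smul_mul_assoc, X_two_zero, X_two_one, smul_neg]
  abel

theorem X_zero_sq_mul (i : Fin 3) : (X k 0) ^ 2 * X k i = X k i * (X k 0) ^ 2 := by
  fin_cases i
  · simp [pow_two, mul_assoc]
  · exact anticomm_sq (X_one_zero k)
  · exact anticomm_sq (X_two_zero k)

theorem X_zero_sq_u (l : k) :
    X k 0 ^ 2 * (l • X k 0 - X k 1) = (l • X k 0 - X k 1) * X k 0 ^ 2 := by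
  simp only [mul_sub, sub_mul, mul_smul_comm, smul_mul_assoc, X_zero_sq_mul]

/-- The homomorphism `B → K` into a subalgebra `K` of `A`, given by
`X ↦ u = l x₁ − x₂`, `Y ↦ x₃`, `Z ↦ x₁²`. -/
def bToSub (l : k) (K : Subalgebra k (SkewAlg k)) (hu : l • X k 0 - X k 1 ∈ K)
    (hy : X k 2 ∈ K) (hz : X k 0 ^ 2 ∈ K) : CocycleAlg k →ₐ[k] K :=
  RingQuot.liftAlgHom k ⟨FreeAlgebra.lift k
    ![⟨l • X k 0 - X k 1, hu⟩, ⟨X k 2, hy⟩, ⟨X k 0 ^ 2, hz⟩], by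
    intro f g h
    cases h
    · apply Subtype.ext
      simpa using X_zero_sq_u k l
    · apply Subtype.ext
      simpa using X_zero_sq_mul k 2
    · apply Subtype.ext
      simpa using X_two_u k l⟩

variable {k} {l : k} {K : Subalgebra k (SkewAlg k)} (hu : l • X k 0 - X k 1 ∈ K)
    (hy : X k 2 ∈ K) (hz : X k 0 ^ 2 ∈ K)

theorem bToSub_zero : bToSub k l K hu hy hz (bGen k 0) = ⟨l • X k 0 - X k 1, hu⟩ := by
  simp [bToSub, bGen]

theorem bToSub_one : bToSub k l K hu hy hz (bGen k 1) = ⟨X k 2, hy⟩ := by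
  simp [bToSub, bGen]

theorem bToSub_two : bToSub k l K hu hy hz (bGen k 2) = ⟨X k 0 ^ 2, hz⟩ := by
  simp [bToSub, bGen]

/-- The first column of the matrix by which `b ∈ B` acts on `A = S ⊕ x₁S` is `(b, 0)`, i.e.
`b · 1 = b`. -/
theorem aRep_bToSub (b : CocycleAlg k) :
    aRep k l (bToSub k l K hu hy hz b) 0 0 = b ∧ aRep k l (bToSub k l K hu hy hz b) 1 0 = 0 := by
  let N : Submodule k (CocycleAlg k) :=
    { carrier := {b | aRep k l (bToSub k l K hu hy hz b) 0 0 = b ∧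
        aRep k l (bToSub k l K hu hy hz b) 1 0 = 0}
      zero_mem' := by simp
      add_mem' := by
        rintro a b ⟨h1, h2⟩ ⟨h3, h4⟩
        simp [h1, h2, h3, h4]
      smul_mem' := by
        rintro c b ⟨h1, h2⟩
        simp [h1, h2] }
  refine submodule_eq_top_of_gen N (by simp [N]) ?_ b
  rintro i b ⟨h1, h2⟩
  change bGen k i * b ∈ N
  have h3 : aRep k l (X k 0 ^ 2) = !![bGen k 2, 0; 0, bGen k 2] := by
    rw [map_pow, aRep_zero, pow_two]; ext i j : 1; fin_cases i <;> fin_cases j <;> simp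
  have h4 : aRep k l (l • X k 0 - X k 1) = !![bGen k 0, (2 * l) • bGen k 2; 0, -bGen k 0] := by
    rw [map_sub, map_smul, aRep_zero, aRep_one]
    ext i j : 1; fin_cases i <;> fin_cases j <;>
      simp [two_mul, add_smul, Algebra.algebraMap_eq_smul_one]
  fin_cases i
  · simp [N, bToSub_zero, -map_sub, h4, Matrix.mul_apply, Fin.sum_univ_two, h1, h2]
  · simp [N, bToSub_one, aRep_two, Matrix.mul_apply, Fin.sum_univ_two, h1, h2]
  · simp [N, bToSub_two, -map_pow, h3, Matrix.mul_apply, Fin.sum_univ_two, h1, h2]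

/-- `B → A` is injective: `b` is recovered from its action on `1 ∈ A` through `aRep`. -/
theorem bToSub_injective : Function.Injective (bToSub k l K hu hy hz) := by
  intro a b h
  rw [← (aRep_bToSub hu hy hz a).1, h, (aRep_bToSub hu hy hz b).1]

/-- `A = S + x₁S`, where `S` is the image of `B`. -/
theorem exists_decomp (a : SkewAlg k) : ∃ p q : CocycleAlg k,
    a = bToSub k l K hu hy hz p + X k 0 * bToSub k l K hu hy hz q := by
  set β := bToSub k l K hu hy hz with hβ
  have b0 : (β (bGen k 0) : SkewAlg k) = l • X k 0 - X k 1 := by rw [hβ, bToSub_zero]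
  have b1 : (β (bGen k 1) : SkewAlg k) = X k 2 := by rw [hβ, bToSub_one]
  have b2 : (β (bGen k 2) : SkewAlg k) = X k 0 ^ 2 := by rw [hβ, bToSub_two]
  let N : Submodule k (SkewAlg k) :=
    { carrier := {a | ∃ p q : CocycleAlg k, a = β p + X k 0 * β q}
      zero_mem' := ⟨0, 0, by simp⟩
      add_mem' := by
        rintro _ _ ⟨p, q, rfl⟩ ⟨p', q', rfl⟩
        exact ⟨p + p', q + q', by simp [mul_add]; abel⟩
      smul_mem' := by
        rintro c _ ⟨p, q, rfl⟩
        exact ⟨c • p, c • q, by simp⟩ }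
  have hx : ∀ a ∈ N, X k 0 * a ∈ N := by
    rintro _ ⟨p, q, rfl⟩
    refine ⟨bGen k 2 * q, p, ?_⟩
    simp only [map_mul, Subalgebra.coe_mul, b2]
    rw [mul_add, ← mul_assoc, pow_two, add_comm]
  have hU : ∀ a ∈ N, (l • X k 0 - X k 1) * a ∈ N := by
    rintro _ ⟨p, q, rfl⟩
    refine ⟨bGen k 0 * p + (2 * l) • (bGen k 2 * q), -(bGen k 0 * q), ?_⟩
    simp only [map_add, map_smul, map_neg, map_mul, Subalgebra.coe_mul, Subalgebra.coe_add,
      Subalgebra.coe_smul, Subalgebra.coe_neg, b0, b2]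
    exact anticomm_decomp_u (X_one_zero k) l _ _
  refine submodule_eq_top_of_gen N ⟨1, 0, by simp⟩ ?_ a
  intro i a ha
  change X k i * a ∈ N
  fin_cases i
  · exact hx a ha
  · have : X k 1 * a = l • (X k 0 * a) - (l • X k 0 - X k 1) * a := by
      rw [sub_mul, smul_mul_assoc]; abel
    change X k 1 * a ∈ N
    rw [this]
    exact N.sub_mem (N.smul_mem _ (hx a ha)) (hU a ha)
  · obtain ⟨p, q, rfl⟩ := ha
    refine ⟨bGen k 1 * p, -(bGen k 1 * q), ?_⟩
    simp only [map_neg, map_mul, Subalgebra.coe_mul, Subalgebra.coe_neg, b1, Fin.reduceFinMk]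
    exact anticomm_decomp_y (X_two_zero k) _ _

end SkewAlg

/-- Assume `M` has the rank-one form, with `m₁₂l₁² + m₁₃l₂² = m₁₁`,
`l₁ ≠ 0` and `l₂ = 0` (so `m₁₁ = m₁₂l₁²`).  Then there is a `k`-algebra isomorphism from
`k⟨X,Y,Z⟩/(m₁₂X² + m₁₃Y², ZX − XZ, ZY − YZ, XY + YX)` onto the cohomology algebra `H(A)`
sending `X` to `⌈l₁x₁ − x₂⌉`, `Y` to `⌈x₃⌉` and `Z` to `⌈x₁²⌉`. -/
theorem stmt19 (k : Type) [Field k] [IsAlgClosed k] [CharZero k]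
    (m11 m12 m13 l1 l2 : k) (hm : ¬(m11 = 0 ∧ m12 = 0 ∧ m13 = 0))
    (M : Matrix (Fin 3) (Fin 3) k)
    (hM : M = !![m11, m12, m13; l1 * m11, l1 * m12, l1 * m13; l2 * m11, l2 * m12, l2 * m13])
    (D : DGDiff k M)
    (h1 : m12 * l1 ^ 2 + m13 * l2 ^ 2 = m11) (h2 : l1 ≠ 0) (h3 : l2 = 0)
    (K : Subalgebra k (SkewAlg k)) (hK : ∀ a : SkewAlg k, a ∈ K ↔ D.d a = 0)
    (hz1 : l1 • X k 0 - X k 1 ∈ K) (hz2 : X k 2 ∈ K) (hz3 : (X k 0) ^ 2 ∈ K) :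
    ∃ φ : RingQuot (HRel19 k m12 m13) ≃ₐ[k] CohomAlg k D K,
      φ (RingQuot.mkAlgHom k (HRel19 k m12 m13) (FreeAlgebra.ι k 0)) =
        RingQuot.mkAlgHom k (cohomRel k D K) ⟨l1 • X k 0 - X k 1, hz1⟩ ∧
      φ (RingQuot.mkAlgHom k (HRel19 k m12 m13) (FreeAlgebra.ι k 1)) =
        RingQuot.mkAlgHom k (cohomRel k D K) ⟨X k 2, hz2⟩ ∧
      φ (RingQuot.mkAlgHom k (HRel19 k m12 m13) (FreeAlgebra.ι k 2)) =
        RingQuot.mkAlgHom k (cohomRel k D K) ⟨(X k 0) ^ 2, hz3⟩ := by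
  subst h3
  have hm' : ¬(m12 = 0 ∧ m13 = 0) := by
    rintro ⟨rfl, rfl⟩
    exact hm ⟨by simpa using h1.symm, rfl, rfl⟩
  set β := bToSub k l1 K hz1 hz2 hz3 with hβ
  have b0 : β (bGen k 0) = ⟨l1 • X k 0 - X k 1, hz1⟩ := by rw [hβ, bToSub_zero]
  have b1 : β (bGen k 1) = ⟨X k 2, hz2⟩ := by rw [hβ, bToSub_one]
  have b2 : β (bGen k 2) = ⟨X k 0 ^ 2, hz3⟩ := by rw [hβ, bToSub_two]
  -- `∂x₁ = m₁₁x₁² + m₁₂x₂² + m₁₃x₃²` is the image of `W`, because `u² = l₁²x₁² + x₂²` and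
  -- `m₁₁ = m₁₂l₁²`.
  have hdx : D.d (X k 0) = β (bW k m12 m13) := by
    rw [D.dX, hM]
    simp only [bW, map_add, map_smul, map_mul, b0, b1, Subalgebra.coe_add, Subalgebra.coe_smul,
      Subalgebra.coe_mul, anticomm_u_sq (X_one_zero k), smul_add, smul_smul]
    have : m11 = m12 * l1 ^ 2 := by rw [← h1]; ring
    simp [this, pow_two]
  have hdβ (b : CocycleAlg k) : D.d (β b) = 0 := (hK _).1 (β b).2
  -- `∂(p + x₁q) = w q` for `p, q ∈ S`
  have hdec (p q : CocycleAlg k) :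
      D.d (β p + X k 0 * β q) = β (bW k m12 m13 * q) := by
    have hx : X k 0 ∈ deg k 1 := by
      rw [deg, pow_one]
      exact Submodule.subset_span (by simp)
    rw [map_add, D.leibniz 1 _ hx, hdβ, hdβ, hdx]
    simp
  have hinj : Function.Injective β := bToSub_injective hz1 hz2 hz3
  have hsurj : Function.Surjective β := by
    rintro ⟨a, ha⟩
    obtain ⟨p, q, rfl⟩ := exists_decomp hz1 hz2 hz3 a
    have h0 := (hK _).1 ha
    rw [hdec] at h0
    have hq : q = 0 := by
      apply bW_mul_eq_zero k hm'
      apply hinj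
      apply Subtype.ext
      simpa using h0
    refine ⟨p, Subtype.ext ?_⟩
    simp [hq, hβ]
  let e : CocycleAlg k ≃ₐ[k] K := AlgEquiv.ofBijective β ⟨hinj, hsurj⟩
  have he (b : CocycleAlg k) : e b = β b := rfl
  let R := RingQuot (HRel19 k m12 m13)
  let g : Fin 3 → R := fun i => RingQuot.mkAlgHom k (HRel19 k m12 m13) (FreeAlgebra.ι k i)
  have hg1 : m12 • (g 0 * g 0) + m13 • (g 1 * g 1) = 0 := by
    simpa [g] using RingQuot.mkAlgHom_rel k (HRel19.rel1 (k := k) (m12 := m12) (m13 := m13))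
  have hg2 : g 2 * g 0 - g 0 * g 2 = 0 := by
    simpa [g] using RingQuot.mkAlgHom_rel k (HRel19.rel2 (k := k) (m12 := m12) (m13 := m13))
  have hg3 : g 2 * g 1 - g 1 * g 2 = 0 := by
    simpa [g] using RingQuot.mkAlgHom_rel k (HRel19.rel3 (k := k) (m12 := m12) (m13 := m13))
  have hg4 : g 0 * g 1 + g 1 * g 0 = 0 := by
    simpa [g] using RingQuot.mkAlgHom_rel k (HRel19.rel4 (k := k) (m12 := m12) (m13 := m13))
  -- the canonical projection `B → B/(W)`
  let ρ : CocycleAlg k →ₐ[k] R := RingQuot.liftAlgHom k ⟨FreeAlgebra.lift k g, by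
    intro a b h
    cases h
    · simpa using sub_eq_zero.1 hg2
    · simpa using sub_eq_zero.1 hg3
    · simpa using eq_neg_of_add_eq_zero_right hg4⟩
  have hρ (i : Fin 3) : ρ (bGen k i) = g i := by simp [ρ, bGen]
  have hρW : ρ (bW k m12 m13) = 0 := by simp [bW, hρ, hg1]
  let mk := RingQuot.mkAlgHom k (cohomRel k D K)
  have hmk (q : CocycleAlg k) : mk (β (bW k m12 m13 * q)) = 0 := by
    rw [← map_zero mk]
    apply RingQuot.mkAlgHom_rel
    refine ⟨β 0 + X k 0 * β q, ?_⟩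
    rw [hdec]; simp
  -- `f : B → H(A)` kills `W`, hence factors through `φ : B/(W) → H(A)`
  let f : CocycleAlg k →ₐ[k] CohomAlg k D K := mk.comp β
  have hlift (a : FreeAlgebra k (Fin 3)) :
      FreeAlgebra.lift k (fun i => f (bGen k i)) a =
        mk (β (FreeAlgebra.lift k (bGen k) a)) := by
    have : FreeAlgebra.lift k (fun i => f (bGen k i)) =
        f.comp (FreeAlgebra.lift k (bGen k)) :=
      FreeAlgebra.hom_ext (funext fun i => by simp)
    exact AlgHom.congr_fun this a
  let φ : R →ₐ[k] CohomAlg k D K := RingQuot.liftAlgHom k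
    ⟨FreeAlgebra.lift k fun i => f (bGen k i), by
    intro a b h
    rw [hlift, hlift]
    cases h
    · simpa [bW] using hmk 1
    · congr 2
      simp [bGen_zx]
    · congr 2
      simp [bGen_zy]
    · congr 2
      simp [bGen_yx]⟩
  have hφ (i : Fin 3) : φ (g i) = f (bGen k i) := by 
    exact (RingQuot.liftAlgHom_mkAlgHom_apply k _ _ _).trans (FreeAlgebra.lift_ι_apply _ _)
  have hφρ : φ.comp ρ = f := by
    refine RingQuot.ringQuot_ext' k _ _ (FreeAlgebra.hom_ext (funext fun i => ?_))
    change φ (ρ (bGen k i)) = f (bGen k i)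
    rw [hρ, hφ]
  -- the inverse of `φ`: if two cocycles are cohomologous, their preimages in `B` differ by some `W q`
  let ψ : CohomAlg k D K →ₐ[k] R := RingQuot.liftAlgHom k
    ⟨ρ.comp (e.symm : K →ₐ[k] CocycleAlg k), by
    intro a b h
    obtain ⟨p, rfl⟩ := hsurj a
    obtain ⟨p', rfl⟩ := hsurj b
    obtain ⟨c, hc⟩ := h
    obtain ⟨s, q, rfl⟩ := exists_decomp hz1 hz2 hz3 c
    have hc' : bW k m12 m13 * q = p - p' := by
      apply hinj
      apply Subtype.ext
      rw [← hdec s q, map_sub]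
      exact hc
    change ρ (e.symm (e p)) = ρ (e.symm (e p'))
    rw [e.symm_apply_apply, e.symm_apply_apply, ← sub_eq_zero, ← map_sub,
      ← hc', map_mul, hρW, zero_mul]⟩
  have hψ (p : CocycleAlg k) : ψ (mk (β p)) = ρ p := by
    simp [ψ, mk, ← he]
  have h12 : φ.comp ψ = AlgHom.id k _ := by
    refine RingQuot.ringQuot_ext' k _ _ (AlgHom.ext fun a => ?_)
    obtain ⟨p, rfl⟩ := hsurj a
    change φ (ψ (mk (β p))) = mk (β p)
    rw [hψ]
    exact AlgHom.congr_fun hφρ p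
  have h21 : ψ.comp φ = AlgHom.id k _ := by
    refine RingQuot.ringQuot_ext' k _ _ (FreeAlgebra.hom_ext (funext fun i => ?_))
    change ψ (φ (g i)) = g i
    rw [hφ, ← hρ]
    exact hψ _
  refine ⟨AlgEquiv.ofAlgHom φ ψ h12 h21, ?_, ?_, ?_⟩
  · exact (hφ 0).trans (congrArg mk b0)
  · exact (hφ 1).trans (congrArg mk b1)
  · exact (hφ 2).trans (congrArg mk b2)
end
end
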